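/- Compilation into λB′ preserves precision: suppose M : Γ ⊢G A and M' : Γ' ⊢G A' are well-typed GTLC terms. If Γ ⊑* Γ' and M ⊑G M', then 𝒞'[M] ⊑C 𝒞'[M'] (the compiled λB′ cast-calculus terms are related by term precision) and A ⊑ A'. -/

import Mathlib

/-!
The proof is an induction on the derivation of `M ⊑G M'`, proving the two conclusions
simultaneously. Both compilations insert casts at the same syntactic positions, so the compiled
terms are always related by a congruence rule together with the rule `TPrec.cast` for each inserted
pair of casts. The premises of `TPrec.cast` on the source types are the induction hypotheses; those
on the target types come from monotonicity of the operations which compute the targets, namely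
matching (`MatchArr.prec`, `MatchProd.prec`) and the join of consistent types
(`Consis.join_mono`). The latter holds because the join is the least upper bound for precision
(`Consis.prec_join`, `Consis.join_prec`). Precision of the contexts is used for variables
(`CtxPrec.var`) and is extended under the binders by precision of the annotations.
-/

set_option maxHeartbeats 1000000

abbrev Label : Type := ℕ

inductive BaseTy : Type
  | nat | bool | int | unit | bot
deriving DecidableEq

inductive GType : Type
  | base (b : BaseTy)
  | unk
  | arr (A B : GType)
  | prod (A B : GType)
  | sum (A B : GType)
deriving DecidableEq

inductive Atomic : GType → Prop
  | base (b : BaseTy) : Atomic (.base b)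
  | unk : Atomic .unk

inductive TyPrec : GType → GType → Prop
  | unk (A : GType) : TyPrec .unk A
  | base (b : BaseTy) : TyPrec (.base b) (.base b)
  | arr : TyPrec A A' → TyPrec B B' → TyPrec (.arr A B) (.arr A' B')
  | prod : TyPrec A A' → TyPrec B B' → TyPrec (.prod A B) (.prod A' B')
  | sum : TyPrec A A' → TyPrec B B' → TyPrec (.sum A B) (.sum A' B')

inductive CtxPrec : List GType → List GType → Prop
  | nil : CtxPrec [] []
  | cons : TyPrec A A' → CtxPrec Γ Γ' → CtxPrec (A :: Γ) (A' :: Γ')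

inductive Consis : GType → GType → Type
  | unkR (A : GType) : Consis A .unk
  | unkL (B : GType) : Consis .unk B
  | base (b : BaseTy) : Consis (.base b) (.base b)
  | arr : Consis A' A → Consis B B' → Consis (.arr A B) (.arr A' B')
  | prod : Consis A A' → Consis B B' → Consis (.prod A B) (.prod A' B')
  | sum : Consis A A' → Consis B B' → Consis (.sum A B) (.sum A' B')

def Consis.join : ∀ {A B : GType}, Consis A B → GType
  | _, _, .unkR A => A
  | _, _, .unkL B => B
  | _, _, .base b => .base b
  | _, _, .arr c d => .arr c.join d.join
  | _, _, .prod c d => .prod c.join d.join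
  | _, _, .sum c d => .sum c.join d.join

def Consis.refl : (A : GType) → Consis A A
  | .unk => .unkR .unk
  | .base b => .base b
  | .arr A B => .arr (Consis.refl A) (Consis.refl B)
  | .prod A B => .prod (Consis.refl A) (Consis.refl B)
  | .sum A B => .sum (Consis.refl A) (Consis.refl B)

def Consis.symm : ∀ {A B : GType}, Consis A B → Consis B A
  | _, _, .unkR A => .unkL A
  | _, _, .unkL B => .unkR B
  | _, _, .base b => .base b
  | _, _, .arr c d => .arr c.symm d.symm
  | _, _, .prod c d => .prod c.symm d.symm
  | _, _, .sum c d => .sum c.symm d.symm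

mutual
def Consis.joinL : ∀ {A B : GType}, (c : Consis A B) → Consis A c.join
  | _, _, .unkR A => Consis.refl A
  | _, _, .unkL B => .unkL B
  | _, _, .base b => .base b
  | _, _, .arr c d => .arr (Consis.joinR c).symm (Consis.joinL d)
  | _, _, .prod c d => .prod (Consis.joinL c) (Consis.joinL d)
  | _, _, .sum c d => .sum (Consis.joinL c) (Consis.joinL d)

def Consis.joinR : ∀ {A B : GType}, (c : Consis A B) → Consis B c.join
  | _, _, .unkR A => .unkL A
  | _, _, .unkL B => Consis.refl B
  | _, _, .base b => .base b
  | _, _, .arr c d => .arr (Consis.joinL c).symm (Consis.joinR d)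
  | _, _, .prod c d => .prod (Consis.joinR c) (Consis.joinR d)
  | _, _, .sum c d => .sum (Consis.joinR c) (Consis.joinR d)
end

inductive GVar : List GType → GType → Type
  | z : GVar (A :: Γ) A
  | s : GVar Γ A → GVar (B :: Γ) A

def GVar.idx : ∀ {Γ A}, GVar Γ A → ℕ
  | _, _, .z => 0
  | _, _, .s x => x.idx + 1

inductive Prim : GType → Type
  | base (b : BaseTy) : Prim (.base b)
  | fn (b : BaseTy) {A : GType} : Prim A → Prim (.arr (.base b) A)

def BaseTy.rep : BaseTy → Type
  | .nat => ℕ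
  | .bool => Bool
  | .int => ℤ
  | .unit => Unit
  | .bot => Empty

def Prim.rep : ∀ {A : GType}, Prim A → Type
  | _, .base b => b.rep
  | _, .fn b p => b.rep → p.rep
inductive MatchArr : GType → GType → GType → Type
  | arr (A B : GType) : MatchArr (.arr A B) A B
  | unk : MatchArr .unk .unk .unk

inductive MatchProd : GType → GType → GType → Type
  | prod (A B : GType) : MatchProd (.prod A B) A B
  | unk : MatchProd .unk .unk .unk

inductive MatchSum : GType → GType → GType → Type
  | sum (A B : GType) : MatchSum (.sum A B) A B
  | unk : MatchSum .unk .unk .unk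

def MatchArr.consis : ∀ {A A₁ A₂ : GType}, MatchArr A A₁ A₂ → Consis A (.arr A₁ A₂)
  | _, _, _, .arr A B => Consis.refl (.arr A B)
  | _, _, _, .unk => .unkL _

def MatchProd.consis : ∀ {A A₁ A₂ : GType}, MatchProd A A₁ A₂ → Consis A (.prod A₁ A₂)
  | _, _, _, .prod A B => Consis.refl (.prod A B)
  | _, _, _, .unk => .unkL _

def MatchSum.consis : ∀ {A A₁ A₂ : GType}, MatchSum A A₁ A₂ → Consis A (.sum A₁ A₂)
  | _, _, _, .sum A B => Consis.refl (.sum A B)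
  | _, _, _, .unk => .unkL _

inductive GTerm : List GType → GType → Type
  | const {Γ : List GType} {A : GType} (p : Prim A) (k : p.rep) : GTerm Γ A
  | var {Γ A} (x : GVar Γ A) : GTerm Γ A
  | lam {Γ B} (A : GType) (N : GTerm (A :: Γ) B) : GTerm Γ (.arr A B)
  | app {Γ A A₁ A₂ B} (L : GTerm Γ A) (M : GTerm Γ B) (ℓ : Label)
      (m : MatchArr A A₁ A₂) (cn : Consis A₁ B) : GTerm Γ A₂
  | ite {Γ A B C} (L : GTerm Γ A) (M : GTerm Γ B) (N : GTerm Γ C) (ℓ : Label)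
      (cb : Consis A (.base .bool)) (cn : Consis B C) : GTerm Γ cn.join
  | cons {Γ A B} (M : GTerm Γ A) (N : GTerm Γ B) : GTerm Γ (.prod A B)
  | fst {Γ A A₁ A₂} (M : GTerm Γ A) (ℓ : Label) (m : MatchProd A A₁ A₂) : GTerm Γ A₁
  | snd {Γ A A₁ A₂} (M : GTerm Γ A) (ℓ : Label) (m : MatchProd A A₁ A₂) : GTerm Γ A₂
  | inl {Γ A} (B : GType) (M : GTerm Γ A) : GTerm Γ (.sum A B)
  | inr {Γ B} (A : GType) (M : GTerm Γ B) : GTerm Γ (.sum A B)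
  | case {Γ A B₁ B₂ C₁ C₂} (L : GTerm Γ A) (M : GTerm (B₁ :: Γ) B₂) (N : GTerm (C₁ :: Γ) C₂)
      (ℓ : Label) (ca : Consis A (.sum B₁ C₁)) (bc : Consis B₂ C₂) : GTerm Γ bc.join

inductive GPrec : ∀ {Γ Γ' : List GType} {A A' : GType}, GTerm Γ A → GTerm Γ' A' → Prop
  | const {Γ Γ' : List GType} {A : GType} (p : Prim A) (k : p.rep) :
      GPrec (Γ := Γ) (Γ' := Γ') (.const p k) (.const p k)
  | var {Γ Γ' A A'} (x : GVar Γ A) (x' : GVar Γ' A') :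
      x.idx = x'.idx → GPrec (.var x) (.var x')
  | lam {Γ Γ' A A' B B'} {N : GTerm (A :: Γ) B} {N' : GTerm (A' :: Γ') B'} :
      TyPrec A A' → GPrec N N' → GPrec (.lam A N) (.lam A' N')
  | app {Γ Γ' A A' A₁ A₂ A₁' A₂' B B' ℓ ℓ'}
      {L : GTerm Γ A} {L' : GTerm Γ' A'} {M : GTerm Γ B} {M' : GTerm Γ' B'}
      {m : MatchArr A A₁ A₂} {m' : MatchArr A' A₁' A₂'} {cn : Consis A₁ B} {cn' : Consis A₁' B'} :
      GPrec L L' → GPrec M M' → GPrec (.app L M ℓ m cn) (.app L' M' ℓ' m' cn')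
  | ite {Γ Γ' A A' B B' C C' ℓ ℓ'}
      {L : GTerm Γ A} {L' : GTerm Γ' A'} {M : GTerm Γ B} {M' : GTerm Γ' B'}
      {N : GTerm Γ C} {N' : GTerm Γ' C'}
      {cb : Consis A (.base .bool)} {cb' : Consis A' (.base .bool)}
      {cn : Consis B C} {cn' : Consis B' C'} :
      GPrec L L' → GPrec M M' → GPrec N N' →
      GPrec (.ite L M N ℓ cb cn) (.ite L' M' N' ℓ' cb' cn')
  | cons {Γ Γ' A A' B B'} {M : GTerm Γ A} {M' : GTerm Γ' A'} {N : GTerm Γ B} {N' : GTerm Γ' B'} :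
      GPrec M M' → GPrec N N' → GPrec (.cons M N) (.cons M' N')
  | fst {Γ Γ' A A' A₁ A₂ A₁' A₂' ℓ ℓ'} {M : GTerm Γ A} {M' : GTerm Γ' A'}
      {m : MatchProd A A₁ A₂} {m' : MatchProd A' A₁' A₂'} :
      GPrec M M' → GPrec (.fst M ℓ m) (.fst M' ℓ' m')
  | snd {Γ Γ' A A' A₁ A₂ A₁' A₂' ℓ ℓ'} {M : GTerm Γ A} {M' : GTerm Γ' A'}
      {m : MatchProd A A₁ A₂} {m' : MatchProd A' A₁' A₂'} :
      GPrec M M' → GPrec (.snd M ℓ m) (.snd M' ℓ' m')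
  | inl {Γ Γ' A A' B B'} {M : GTerm Γ A} {M' : GTerm Γ' A'} :
      TyPrec B B' → GPrec M M' → GPrec (.inl B M) (.inl B' M')
  | inr {Γ Γ' A A' B B'} {M : GTerm Γ B} {M' : GTerm Γ' B'} :
      TyPrec A A' → GPrec M M' → GPrec (.inr A M) (.inr A' M')
  | case {Γ Γ' A A' B₁ B₂ C₁ C₂ B₁' B₂' C₁' C₂' ℓ ℓ'}
      {L : GTerm Γ A} {L' : GTerm Γ' A'}
      {M : GTerm (B₁ :: Γ) B₂} {M' : GTerm (B₁' :: Γ') B₂'}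
      {N : GTerm (C₁ :: Γ) C₂} {N' : GTerm (C₁' :: Γ') C₂'}
      {ca : Consis A (.sum B₁ C₁)} {ca' : Consis A' (.sum B₁' C₁')}
      {bc : Consis B₂ C₂} {bc' : Consis B₂' C₂'} :
      TyPrec B₁ B₁' → TyPrec C₁ C₁' → GPrec L L' → GPrec M M' → GPrec N N' →
      GPrec (.case L M N ℓ ca bc) (.case L' M' N' ℓ' ca' bc')

/-- Ground types. -/
inductive Ground : GType → Prop
  | base (b : BaseTy) : Ground (.base b)
  | arr : Ground (.arr .unk .unk)
  | prod : Ground (.prod .unk .unk)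
  | sum : Ground (.sum .unk .unk)

/-- λB casts: a source type, target type, blame label, and a consistency proof. -/
inductive LBCast : GType → GType → Type
  | mk (A B : GType) (ℓ : Label) (h : Consis A B) : LBCast A B

/-- Cross casts. -/
inductive LBCross : ∀ {A B : GType}, LBCast A B → Prop
  | arr {A B C D : GType} {ℓ h} : LBCross (.mk (.arr A B) (.arr C D) ℓ h)
  | prod {A B C D : GType} {ℓ h} : LBCross (.mk (.prod A B) (.prod C D) ℓ h)
  | sum {A B C D : GType} {ℓ h} : LBCross (.mk (.sum A B) (.sum C D) ℓ h)

/-- The two variants of λB: Variant 1 takes all cross casts to be inert;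
Variant 2 takes only function casts (among the cross casts) to be inert. -/
inductive LBVariant | v1 | v2

/-- Inert λB casts (per variant): injections from ground types are inert in both
variants; function casts are inert in both; pair and sum cross casts are inert
only in Variant 1. -/
inductive LBInert : LBVariant → ∀ {A B : GType}, LBCast A B → Prop
  | inj (v : LBVariant) {G : GType} {ℓ h} : Ground G → LBInert v (.mk G .unk ℓ h)
  | arr (v : LBVariant) {A B C D : GType} {ℓ h} :
      LBInert v (.mk (.arr A B) (.arr C D) ℓ h)
  | prod {A B C D : GType} {ℓ h} : LBInert .v1 (.mk (.prod A B) (.prod C D) ℓ h)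
  | sum {A B C D : GType} {ℓ h} : LBInert .v1 (.mk (.sum A B) (.sum C D) ℓ h)

/-- Active λB casts (per variant): identity casts on atomic types, injections
from non-ground non-`?` types, and projections are active in both variants;
pair and sum cross casts are active only in Variant 2. -/
inductive LBActive : LBVariant → ∀ {A B : GType}, LBCast A B → Prop
  | id (v : LBVariant) {a : GType} {ℓ h} : Atomic a → LBActive v (.mk a a ℓ h)
  | inj (v : LBVariant) {A : GType} {ℓ h} : A ≠ .unk → ¬ Ground A →
      LBActive v (.mk A .unk ℓ h)
  | proj (v : LBVariant) {B : GType} {ℓ h} : B ≠ .unk → LBActive v (.mk .unk B ℓ h)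
  | prod {A B C D : GType} {ℓ h} : LBActive .v2 (.mk (.prod A B) (.prod C D) ℓ h)
  | sum {A B C D : GType} {ℓ h} : LBActive .v2 (.mk (.sum A B) (.sum C D) ℓ h)

/-- Renamings. -/
def Ren (Γ Δ : List GType) : Type := ∀ A : GType, GVar Γ A → GVar Δ A

def Ren.ext {Γ Δ : List GType} (ρ : Ren Γ Δ) (B : GType) : Ren (B :: Γ) (B :: Δ) :=
  fun _ x =>
    match x with
    | .z => .z
    | .s y => .s (ρ _ y)

def shiftRen {Γ : List GType} (B : GType) : Ren Γ (B :: Γ) := fun _ x => .s x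

/-- Intrinsically-typed terms of the `CC′(⇒)` variant of the Parameterized Cast
Calculus: `case` has binding branches and there is a distinguished wrap
application `M⟪c⟫` for inert casts `c`. -/
inductive Tm' (Cast : GType → GType → Type) (Inert : ∀ A B : GType, Cast A B → Prop) :
    List GType → GType → Type
  | const {Γ : List GType} {A : GType} (p : Prim A) (k : p.rep) : Tm' Cast Inert Γ A
  | var {Γ A} (x : GVar Γ A) : Tm' Cast Inert Γ A
  | lam {Γ B} (A : GType) (N : Tm' Cast Inert (A :: Γ) B) : Tm' Cast Inert Γ (.arr A B)
  | app {Γ A B} (L : Tm' Cast Inert Γ (.arr A B)) (M : Tm' Cast Inert Γ A) : Tm' Cast Inert Γ B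
  | ite {Γ A} (L : Tm' Cast Inert Γ (.base .bool)) (M N : Tm' Cast Inert Γ A) :
      Tm' Cast Inert Γ A
  | cons {Γ A B} (M : Tm' Cast Inert Γ A) (N : Tm' Cast Inert Γ B) : Tm' Cast Inert Γ (.prod A B)
  | fst {Γ A B} (M : Tm' Cast Inert Γ (.prod A B)) : Tm' Cast Inert Γ A
  | snd {Γ A B} (M : Tm' Cast Inert Γ (.prod A B)) : Tm' Cast Inert Γ B
  | inl {Γ A} (B : GType) (M : Tm' Cast Inert Γ A) : Tm' Cast Inert Γ (.sum A B)
  | inr {Γ B} (A : GType) (M : Tm' Cast Inert Γ B) : Tm' Cast Inert Γ (.sum A B)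
  | case {Γ A B C} (L : Tm' Cast Inert Γ (.sum A B))
      (M : Tm' Cast Inert (A :: Γ) C) (N : Tm' Cast Inert (B :: Γ) C) : Tm' Cast Inert Γ C
  | cast {Γ A B} (M : Tm' Cast Inert Γ A) (c : Cast A B) : Tm' Cast Inert Γ B
  | wrap {Γ A B} (M : Tm' Cast Inert Γ A) (c : Cast A B) (i : Inert A B c) : Tm' Cast Inert Γ B
  | blame {Γ} (A : GType) (ℓ : Label) : Tm' Cast Inert Γ A

def Tm'.rename {Cast Inert} :
    ∀ {Γ Δ : List GType} {A : GType}, Ren Γ Δ → Tm' Cast Inert Γ A → Tm' Cast Inert Δ A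
  | _, _, _, _, .const p k => .const p k
  | _, _, _, ρ, .var x => .var (ρ _ x)
  | _, _, _, ρ, .lam A N => .lam A (N.rename (ρ.ext _))
  | _, _, _, ρ, .app L M => .app (L.rename ρ) (M.rename ρ)
  | _, _, _, ρ, .ite L M N => .ite (L.rename ρ) (M.rename ρ) (N.rename ρ)
  | _, _, _, ρ, .cons M N => .cons (M.rename ρ) (N.rename ρ)
  | _, _, _, ρ, .fst M => .fst (M.rename ρ)
  | _, _, _, ρ, .snd M => .snd (M.rename ρ)
  | _, _, _, ρ, .inl B M => .inl B (M.rename ρ)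
  | _, _, _, ρ, .inr A M => .inr A (M.rename ρ)
  | _, _, _, ρ, .case L M N => .case (L.rename ρ) (M.rename (ρ.ext _)) (N.rename (ρ.ext _))
  | _, _, _, ρ, .cast M c => .cast (M.rename ρ) c
  | _, _, _, ρ, .wrap M c i => .wrap (M.rename ρ) c i
  | _, _, _, _, .blame A ℓ => .blame A ℓ

def Subst' (Cast : GType → GType → Type) (Inert : ∀ A B : GType, Cast A B → Prop)
    (Γ Δ : List GType) : Type :=
  ∀ A : GType, GVar Γ A → Tm' Cast Inert Δ A

def Subst'.exts {Cast Inert} {Γ Δ : List GType} (σ : Subst' Cast Inert Γ Δ) (B : GType) :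
    Subst' Cast Inert (B :: Γ) (B :: Δ) :=
  fun _ x =>
    match x with
    | .z => .var .z
    | .s y => (σ _ y).rename (shiftRen B)

def Tm'.subst {Cast Inert} :
    ∀ {Γ Δ : List GType} {A : GType}, Subst' Cast Inert Γ Δ → Tm' Cast Inert Γ A →
      Tm' Cast Inert Δ A
  | _, _, _, _, .const p k => .const p k
  | _, _, _, σ, .var x => σ _ x
  | _, _, _, σ, .lam A N => .lam A (N.subst (σ.exts _))
  | _, _, _, σ, .app L M => .app (L.subst σ) (M.subst σ)
  | _, _, _, σ, .ite L M N => .ite (L.subst σ) (M.subst σ) (N.subst σ)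
  | _, _, _, σ, .cons M N => .cons (M.subst σ) (N.subst σ)
  | _, _, _, σ, .fst M => .fst (M.subst σ)
  | _, _, _, σ, .snd M => .snd (M.subst σ)
  | _, _, _, σ, .inl B M => .inl B (M.subst σ)
  | _, _, _, σ, .inr A M => .inr A (M.subst σ)
  | _, _, _, σ, .case L M N => .case (L.subst σ) (M.subst (σ.exts _)) (N.subst (σ.exts _))
  | _, _, _, σ, .cast M c => .cast (M.subst σ) c
  | _, _, _, σ, .wrap M c i => .wrap (M.subst σ) c i
  | _, _, _, _, .blame A ℓ => .blame A ℓ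

def substZero' {Cast Inert} {Γ : List GType} {B : GType} (N : Tm' Cast Inert Γ B) :
    Subst' Cast Inert (B :: Γ) Γ :=
  fun _ x =>
    match x with
    | .z => N
    | .s y => .var y

def Tm'.subst1 {Cast Inert} {Γ : List GType} {A B : GType}
    (M : Tm' Cast Inert (B :: Γ) A) (N : Tm' Cast Inert Γ B) : Tm' Cast Inert Γ A :=
  M.subst (substZero' N)

/-- Evaluation frames for `CC′(⇒)`. -/
inductive Frame' (Cast : GType → GType → Type) (Inert : ∀ A B : GType, Cast A B → Prop)
    (Val : ∀ {Γ : List GType} {A : GType}, Tm' Cast Inert Γ A → Prop)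
    (Γ : List GType) : GType → GType → Type
  | appL {A B} (M : Tm' Cast Inert Γ A) : Frame' Cast Inert Val Γ (.arr A B) B
  | appR {A B} (L : Tm' Cast Inert Γ (.arr A B)) (h : Val L) : Frame' Cast Inert Val Γ A B
  | ite {A} (M N : Tm' Cast Inert Γ A) : Frame' Cast Inert Val Γ (.base .bool) A
  | consR {A B} (M : Tm' Cast Inert Γ A) (h : Val M) : Frame' Cast Inert Val Γ B (.prod A B)
  | consL {A B} (N : Tm' Cast Inert Γ B) : Frame' Cast Inert Val Γ A (.prod A B)
  | fst {A B} : Frame' Cast Inert Val Γ (.prod A B) A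
  | snd {A B} : Frame' Cast Inert Val Γ (.prod A B) B
  | inl {A} (B : GType) : Frame' Cast Inert Val Γ A (.sum A B)
  | inr {B} (A : GType) : Frame' Cast Inert Val Γ B (.sum A B)
  | case {A B C} (M : Tm' Cast Inert (A :: Γ) C) (N : Tm' Cast Inert (B :: Γ) C) :
      Frame' Cast Inert Val Γ (.sum A B) C
  | cast {A B} (c : Cast A B) : Frame' Cast Inert Val Γ A B

def plug' {Cast Inert Val} {Γ : List GType} {A B : GType} :
    Tm' Cast Inert Γ A → Frame' Cast Inert Val Γ A B → Tm' Cast Inert Γ B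
  | M, .appL N => .app M N
  | M, .appR L _ => .app L M
  | M, .ite M₁ N₁ => .ite M M₁ N₁
  | M, .consR M₁ _ => .cons M₁ M
  | M, .consL N => .cons M N
  | M, .fst => .fst M
  | M, .snd => .snd M
  | M, .inl B => .inl B M
  | M, .inr A => .inr A M
  | M, .case M₁ N₁ => .case M M₁ N₁
  | M, .cast c => .cast M c

abbrev LBInert' (v : LBVariant) : ∀ A B : GType, LBCast A B → Prop :=
  fun _ _ c => LBInert v c

/-- Terms of the λB′ calculus (per variant): `CC′(⇒)` instantiated with λB casts. -/
abbrev LBTm (v : LBVariant) : List GType → GType → Type := Tm' LBCast (LBInert' v)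

/-- Values of λB′. -/
inductive LBValue (v : LBVariant) : ∀ {Γ : List GType} {A : GType}, LBTm v Γ A → Prop
  | lam {Γ A B} {N : LBTm v (A :: Γ) B} : LBValue v (.lam A N)
  | const {Γ A} {p : Prim A} {k : p.rep} : LBValue v (.const (Γ := Γ) p k)
  | pair {Γ A B} {M : LBTm v Γ A} {N : LBTm v Γ B} :
      LBValue v M → LBValue v N → LBValue v (.cons M N)
  | inl {Γ A B} {M : LBTm v Γ A} : LBValue v M → LBValue v (.inl (Γ := Γ) B M)
  | inr {Γ A B} {M : LBTm v Γ B} : LBValue v M → LBValue v (.inr (Γ := Γ) A M)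
  | wrap {Γ A B} {M : LBTm v Γ A} {c : LBCast A B} {i : LBInert v c} :
      LBValue v M → LBValue v (.wrap M c i)

/-- Cast insertion (compilation) from the GTLC into λB′. -/
def compile (v : LBVariant) : ∀ {Γ : List GType} {A : GType}, GTerm Γ A → LBTm v Γ A
  | _, _, .const p k => .const p k
  | _, _, .var x => .var x
  | _, _, .lam A N => .lam A (compile v N)
  | _, _, .app L M ℓ m cn =>
      .app (.cast (compile v L) (.mk _ _ ℓ m.consis))
           (.cast (compile v M) (.mk _ _ ℓ cn.symm))
  | _, _, .ite L M N ℓ cb cn =>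
      .ite (.cast (compile v L) (.mk _ _ ℓ cb))
           (.cast (compile v M) (.mk _ _ ℓ cn.joinL))
           (.cast (compile v N) (.mk _ _ ℓ cn.joinR))
  | _, _, .cons M N => .cons (compile v M) (compile v N)
  | _, _, .fst M ℓ m => .fst (.cast (compile v M) (.mk _ _ ℓ m.consis))
  | _, _, .snd M ℓ m => .snd (.cast (compile v M) (.mk _ _ ℓ m.consis))
  | _, _, .inl B M => .inl B (compile v M)
  | _, _, .inr A M => .inr A (compile v M)
  | _, _, .case L M N ℓ ca bc =>
      .case (.cast (compile v L) (.mk _ _ ℓ ca))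
            (.cast (compile v M) (.mk _ _ ℓ bc.joinL))
            (.cast (compile v N) (.mk _ _ ℓ bc.joinR))

/-- Precision on λB inert casts: same-ground injections are related, and cross
casts of the same shape are related when their source types and their target
types are pointwise related by precision. -/
inductive CPrecII : ∀ {A B A' B' : GType}, LBCast A B → LBCast A' B' → Prop
  | inj {G : GType} {ℓ ℓ' h h'} : Ground G →
      CPrecII (.mk G .unk ℓ h) (.mk G .unk ℓ' h')
  | arr {A B C D A' B' C' D' : GType} {ℓ ℓ' h h'} :
      TyPrec (.arr A B) (.arr A' B') → TyPrec (.arr C D) (.arr C' D') →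
      CPrecII (.mk (.arr A B) (.arr C D) ℓ h) (.mk (.arr A' B') (.arr C' D') ℓ' h')
  | prod {A B C D A' B' C' D' : GType} {ℓ ℓ' h h'} :
      TyPrec (.prod A B) (.prod A' B') → TyPrec (.prod C D) (.prod C' D') →
      CPrecII (.mk (.prod A B) (.prod C D) ℓ h) (.mk (.prod A' B') (.prod C' D') ℓ' h')
  | sum {A B C D A' B' C' D' : GType} {ℓ ℓ' h h'} :
      TyPrec (.sum A B) (.sum A' B') → TyPrec (.sum C D) (.sum C' D') →
      CPrecII (.mk (.sum A B) (.sum C D) ℓ h) (.mk (.sum A' B') (.sum C' D') ℓ' h')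

/-- Precision between an inert λB cast and a type. -/
inductive CPrecIT : ∀ {A B : GType}, LBCast A B → GType → Prop
  | inj {G A' : GType} {ℓ h} : Ground G → TyPrec G A' → CPrecIT (.mk G .unk ℓ h) A'
  | arr {A B C D A' B' : GType} {ℓ h} :
      TyPrec (.arr A B) (.arr A' B') → TyPrec (.arr C D) (.arr A' B') →
      CPrecIT (.mk (.arr A B) (.arr C D) ℓ h) (.arr A' B')
  | prod {A B C D A' B' : GType} {ℓ h} :
      TyPrec (.prod A B) (.prod A' B') → TyPrec (.prod C D) (.prod A' B') →
      CPrecIT (.mk (.prod A B) (.prod C D) ℓ h) (.prod A' B')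
  | sum {A B C D A' B' : GType} {ℓ h} :
      TyPrec (.sum A B) (.sum A' B') → TyPrec (.sum C D) (.sum A' B') →
      CPrecIT (.mk (.sum A B) (.sum C D) ℓ h) (.sum A' B')

/-- Precision between a type and an inert λB cast. -/
inductive CPrecTI : GType → ∀ {A' B' : GType}, LBCast A' B' → Prop
  | arr {A B A' B' C' D' : GType} {ℓ h} :
      TyPrec (.arr A B) (.arr A' B') → TyPrec (.arr A B) (.arr C' D') →
      CPrecTI (.arr A B) (.mk (.arr A' B') (.arr C' D') ℓ h)
  | prod {A B A' B' C' D' : GType} {ℓ h} :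
      TyPrec (.prod A B) (.prod A' B') → TyPrec (.prod A B) (.prod C' D') →
      CPrecTI (.prod A B) (.mk (.prod A' B') (.prod C' D') ℓ h)
  | sum {A B A' B' C' D' : GType} {ℓ h} :
      TyPrec (.sum A B) (.sum A' B') → TyPrec (.sum A B) (.sum C' D') →
      CPrecTI (.sum A B) (.mk (.sum A' B') (.sum C' D') ℓ h)

/-- Term precision for λB′ terms. -/
inductive TPrec (v : LBVariant) :
    ∀ {Γ Γ' : List GType} {A A' : GType}, LBTm v Γ A → LBTm v Γ' A' → Prop
  | const {Γ Γ' : List GType} {A : GType} (p : Prim A) (k : p.rep) :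
      TPrec v (Γ := Γ) (Γ' := Γ') (.const p k) (.const p k)
  | var {Γ Γ' A A'} (x : GVar Γ A) (x' : GVar Γ' A') :
      x.idx = x'.idx → TPrec v (.var x) (.var x')
  | lam {Γ Γ' A A' B B'} {N : LBTm v (A :: Γ) B} {N' : LBTm v (A' :: Γ') B'} :
      TyPrec A A' → TPrec v N N' → TPrec v (.lam A N) (.lam A' N')
  | app {Γ Γ' A A' B B'} {L : LBTm v Γ (.arr A B)} {L' : LBTm v Γ' (.arr A' B')}
      {M : LBTm v Γ A} {M' : LBTm v Γ' A'} :
      TPrec v L L' → TPrec v M M' → TPrec v (.app L M) (.app L' M')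
  | ite {Γ Γ' A A'} {L : LBTm v Γ (.base .bool)} {L' : LBTm v Γ' (.base .bool)}
      {M N : LBTm v Γ A} {M' N' : LBTm v Γ' A'} :
      TPrec v L L' → TPrec v M M' → TPrec v N N' → TPrec v (.ite L M N) (.ite L' M' N')
  | cons {Γ Γ' A A' B B'} {M : LBTm v Γ A} {M' : LBTm v Γ' A'}
      {N : LBTm v Γ B} {N' : LBTm v Γ' B'} :
      TPrec v M M' → TPrec v N N' → TPrec v (.cons M N) (.cons M' N')
  | fst {Γ Γ' A A' B B'} {M : LBTm v Γ (.prod A B)} {M' : LBTm v Γ' (.prod A' B')} :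
      TPrec v M M' → TPrec v (.fst M) (.fst M')
  | snd {Γ Γ' A A' B B'} {M : LBTm v Γ (.prod A B)} {M' : LBTm v Γ' (.prod A' B')} :
      TPrec v M M' → TPrec v (.snd M) (.snd M')
  | inl {Γ Γ' A A' B B'} {M : LBTm v Γ A} {M' : LBTm v Γ' A'} :
      TyPrec B B' → TPrec v M M' → TPrec v (.inl (Γ := Γ) B M) (.inl (Γ := Γ') B' M')
  | inr {Γ Γ' A A' B B'} {M : LBTm v Γ B} {M' : LBTm v Γ' B'} :
      TyPrec A A' → TPrec v M M' → TPrec v (.inr (Γ := Γ) A M) (.inr (Γ := Γ') A' M')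
  | case {Γ Γ' A₁ A₂ A₁' A₂' C C'} {L : LBTm v Γ (.sum A₁ A₂)} {L' : LBTm v Γ' (.sum A₁' A₂')}
      {M : LBTm v (A₁ :: Γ) C} {M' : LBTm v (A₁' :: Γ') C'}
      {N : LBTm v (A₂ :: Γ) C} {N' : LBTm v (A₂' :: Γ') C'} :
      TyPrec A₁ A₁' → TyPrec A₂ A₂' → TPrec v L L' → TPrec v M M' → TPrec v N N' →
      TPrec v (.case L M N) (.case L' M' N')
  | cast {Γ Γ' A B A' B'} {M : LBTm v Γ A} {M' : LBTm v Γ' A'}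
      {c : LBCast A B} {c' : LBCast A' B'} :
      TyPrec A A' → TyPrec B B' → TPrec v M M' → TPrec v (.cast M c) (.cast M' c')
  | castL {Γ Γ' A B A'} {M : LBTm v Γ A} {M' : LBTm v Γ' A'} {c : LBCast A B} :
      TyPrec A A' → TyPrec B A' → TPrec v M M' → TPrec v (.cast M c) M'
  | castR {Γ Γ' A A' B'} {M : LBTm v Γ A} {M' : LBTm v Γ' A'} {c' : LBCast A' B'} :
      TyPrec A A' → TyPrec A B' → TPrec v M M' → TPrec v M (.cast M' c')
  | wrap {Γ Γ' A B A' B'} {M : LBTm v Γ A} {M' : LBTm v Γ' A'}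
      {c : LBCast A B} {c' : LBCast A' B'} {i : LBInert v c} {i' : LBInert v c'} :
      CPrecII c c' → TPrec v M M' → (B = .unk → B' = .unk) →
      TPrec v (.wrap M c i) (.wrap M' c' i')
  | wrapL {Γ Γ' A B A'} {M : LBTm v Γ A} {M' : LBTm v Γ' A'}
      {c : LBCast A B} {i : LBInert v c} :
      CPrecIT c A' → TPrec v M M' → TPrec v (.wrap M c i) M'
  | wrapR {Γ Γ' A A' B'} {M : LBTm v Γ A} {M' : LBTm v Γ' A'}
      {c' : LBCast A' B'} {i' : LBInert v c'} :
      CPrecTI A c' → TPrec v M M' → A ≠ .unk → TPrec v M (.wrap M' c' i')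
  | blame {Γ Γ' A A'} {M : LBTm v Γ A} {ℓ : Label} :
      TyPrec A A' → TPrec v M (.blame (Γ := Γ') A' ℓ)

theorem TyPrec.refl : ∀ A : GType, TyPrec A A
  | .unk => .unk _
  | .base b => .base b
  | .arr A B => .arr (TyPrec.refl A) (TyPrec.refl B)
  | .prod A B => .prod (TyPrec.refl A) (TyPrec.refl B)
  | .sum A B => .sum (TyPrec.refl A) (TyPrec.refl B)

theorem TyPrec.trans {A B C : GType} (h : TyPrec A B) (k : TyPrec B C) : TyPrec A C := by
  induction h generalizing C with
  | unk _ => exact .unk _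
  | base b => exact k
  | arr _ _ ih₁ ih₂ => cases k with | arr k₁ k₂ => exact .arr (ih₁ k₁) (ih₂ k₂)
  | prod _ _ ih₁ ih₂ => cases k with | prod k₁ k₂ => exact .prod (ih₁ k₁) (ih₂ k₂)
  | sum _ _ ih₁ ih₂ => cases k with | sum k₁ k₂ => exact .sum (ih₁ k₁) (ih₂ k₂)

/-- The join of consistent types is an upper bound of both. The two halves are proved together
because `Consis.arr` swaps the roles of the domains. -/
theorem Consis.prec_join {A B : GType} (c : Consis A B) :
    TyPrec A c.join ∧ TyPrec B c.join := by
  induction c with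
  | unkR A => exact ⟨.refl _, .unk _⟩
  | unkL B => exact ⟨.unk _, .refl _⟩
  | base b => exact ⟨.base _, .base _⟩
  | arr _ _ ih₁ ih₂ => exact ⟨.arr ih₁.2 ih₂.1, .arr ih₁.1 ih₂.2⟩
  | prod _ _ ih₁ ih₂ => exact ⟨.prod ih₁.1 ih₂.1, .prod ih₁.2 ih₂.2⟩
  | sum _ _ ih₁ ih₂ => exact ⟨.sum ih₁.1 ih₂.1, .sum ih₁.2 ih₂.2⟩

/-- The join of consistent types is below every common upper bound. -/
theorem Consis.join_prec {A B C : GType} (c : Consis A B) (hA : TyPrec A C) (hB : TyPrec B C) :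
    TyPrec c.join C := by
  induction c generalizing C with
  | unkR A => exact hA
  | unkL B => exact hB
  | base b => exact hA
  | arr _ _ ih₁ ih₂ =>
    cases hA with | arr a₁ a₂ => cases hB with | arr b₁ b₂ => exact .arr (ih₁ b₁ a₁) (ih₂ a₂ b₂)
  | prod _ _ ih₁ ih₂ =>
    cases hA with | prod a₁ a₂ => cases hB with | prod b₁ b₂ => exact .prod (ih₁ a₁ b₁) (ih₂ a₂ b₂)
  | sum _ _ ih₁ ih₂ =>
    cases hA with | sum a₁ a₂ => cases hB with | sum b₁ b₂ => exact .sum (ih₁ a₁ b₁) (ih₂ a₂ b₂)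

theorem Consis.join_mono {A B A' B' : GType} (c : Consis A B) (c' : Consis A' B')
    (hA : TyPrec A A') (hB : TyPrec B B') : TyPrec c.join c'.join :=
  c.join_prec (hA.trans c'.prec_join.1) (hB.trans c'.prec_join.2)

theorem MatchArr.prec {A A₁ A₂ A' A₁' A₂' : GType} (m : MatchArr A A₁ A₂)
    (m' : MatchArr A' A₁' A₂') (h : TyPrec A A') : TyPrec A₁ A₁' ∧ TyPrec A₂ A₂' := by
  cases m with
  | unk => exact ⟨.unk _, .unk _⟩
  | arr => cases m' with
    | arr => cases h with | arr h₁ h₂ => exact ⟨h₁, h₂⟩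
    | unk => cases h

theorem MatchProd.prec {A A₁ A₂ A' A₁' A₂' : GType} (m : MatchProd A A₁ A₂)
    (m' : MatchProd A' A₁' A₂') (h : TyPrec A A') : TyPrec A₁ A₁' ∧ TyPrec A₂ A₂' := by
  cases m with
  | unk => exact ⟨.unk _, .unk _⟩
  | prod => cases m' with
    | prod => cases h with | prod h₁ h₂ => exact ⟨h₁, h₂⟩
    | unk => cases h

theorem CtxPrec.var {Γ Γ' : List GType} {A A' : GType} (hΓ : CtxPrec Γ Γ')
    (x : GVar Γ A) (x' : GVar Γ' A') (h : x.idx = x'.idx) : TyPrec A A' := by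
  induction hΓ with
  | nil => cases x
  | cons hA _ ih =>
    cases x with
    | z => cases x' with
      | z => exact hA
      | s y' => simp [GVar.idx] at h
    | s y => cases x' with
      | z => simp [GVar.idx] at h
      | s y' => exact ih y y' (by simpa [GVar.idx] using h)

/-- Corollary 5.22 (Compilation into λB′ Preserves Precision): if `Γ ⊑* Γ'` and
`M ⊑G M'`, then the compiled λB′ terms are related by term precision and the
types are related by precision. -/
theorem compile_preserves_precision (v : LBVariant) {Γ Γ' : List GType} {A A' : GType}
    (M : GTerm Γ A) (M' : GTerm Γ' A')
    (hΓ : CtxPrec Γ Γ') (h : GPrec M M') :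
    TPrec v (compile v M) (compile v M') ∧ TyPrec A A' := by
  induction h with
  | const p k => simp only [compile]; exact ⟨.const p k, .refl _⟩
  | var x x' hx => simp only [compile]; exact ⟨.var x x' hx, hΓ.var x x' hx⟩
  | lam hA _ ih =>
    obtain ⟨t, p⟩ := ih (.cons hA hΓ)
    simp only [compile]
    exact ⟨.lam hA t, .arr hA p⟩
  | @app _ _ _ _ _ _ _ _ _ _ _ _ _ _ _ _ m m' _ _ _ _ ihL ihM =>
    obtain ⟨tL, pL⟩ := ihL hΓ
    obtain ⟨tM, pM⟩ := ihM hΓ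
    obtain ⟨p₁, p₂⟩ := m.prec m' pL
    simp only [compile]
    exact ⟨.app (.cast pL (.arr p₁ p₂) tL) (.cast pM p₁ tM), p₂⟩
  | @ite _ _ _ _ _ _ _ _ _ _ _ _ _ _ _ _ _ _ cn cn' _ _ _ ihL ihM ihN =>
    obtain ⟨tL, pL⟩ := ihL hΓ
    obtain ⟨tM, pM⟩ := ihM hΓ
    obtain ⟨tN, pN⟩ := ihN hΓ
    have pJ := cn.join_mono cn' pM pN
    simp only [compile]
    exact ⟨.ite (.cast pL (.base _) tL) (.cast pM pJ tM) (.cast pN pJ tN), pJ⟩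
  | cons _ _ ihM ihN =>
    obtain ⟨tM, pM⟩ := ihM hΓ
    obtain ⟨tN, pN⟩ := ihN hΓ
    simp only [compile]
    exact ⟨.cons tM tN, .prod pM pN⟩
  | @fst _ _ _ _ _ _ _ _ _ _ _ _ m m' _ ih =>
    obtain ⟨t, p⟩ := ih hΓ
    obtain ⟨p₁, p₂⟩ := m.prec m' p
    simp only [compile]
    exact ⟨.fst (.cast p (.prod p₁ p₂) t), p₁⟩
  | @snd _ _ _ _ _ _ _ _ _ _ _ _ m m' _ ih =>
    obtain ⟨t, p⟩ := ih hΓ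
    obtain ⟨p₁, p₂⟩ := m.prec m' p
    simp only [compile]
    exact ⟨.snd (.cast p (.prod p₁ p₂) t), p₂⟩
  | inl hB _ ih =>
    obtain ⟨t, p⟩ := ih hΓ
    simp only [compile]
    exact ⟨.inl hB t, .sum p hB⟩
  | inr hA _ ih =>
    obtain ⟨t, p⟩ := ih hΓ
    simp only [compile]
    exact ⟨.inr hA t, .sum hA p⟩
  | @case _ _ _ _ _ _ _ _ _ _ _ _ _ _ _ _ _ _ _ _ _ _ bc bc' hB hC _ _ _ ihL ihM ihN =>
    obtain ⟨tL, pL⟩ := ihL hΓ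
    obtain ⟨tM, pM⟩ := ihM (.cons hB hΓ)
    obtain ⟨tN, pN⟩ := ihN (.cons hC hΓ)
    have pJ := bc.join_mono bc' pM pN
    simp only [compile]
    exact ⟨.case hB hC (.cast pL (.sum hB hC) tL) (.cast pM pJ tM) (.cast pN pJ tN), pJ⟩
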